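/- Fix ψ₂, γ₁, γ* > 0. (a) The optimization problem T_∞(κ̄) = min{ R(κ̄, d₁, d₂) : d₁² + d₂² ≤ 1, d₂ ≥ 0 } has, for each κ̄ > 0, a unique minimizer (d₁*(κ̄), d₂*(κ̄)), which lies in the open set {(d₁,d₂) : d₁² + d₂² < 1, d₂ > 0} and is uniquely characterized by the first-order stationarity condition ∇_{(d₁,d₂)} R(κ̄, d₁*, d₂*) = 0. (b) The function κ̄ ↦ T_∞(κ̄) is strictly increasing on (0,∞) and satisfies lim_{κ̄↓0} T_∞(κ̄) < 0 < lim_{κ̄↑∞} T_∞(κ̄); hence T_∞ has a unique zero κ̄^wide(ψ₂, γ₁, γ*) on (0,∞). -/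

import Mathlib

/-!
With `T = Y₀ G` and `e` the constant function `1`, `F_κ(c) = ‖(κ e - c₁ T - c₂ Z)⁺‖` in `L²`, so
`F` is jointly sublinear in `(κ, c)`. In a Hilbert lattice `x ↦ ‖x⁺‖` is differentiable wherever
`x⁺ ≠ 0`, with gradient `x⁺ / ‖x⁺‖`; as `Z` is centered and independent of `T`, the derivative of
`F_κ` in `c₂` vanishes on the axis `c₂ = 0`.

On the half-disk `F_κ` is convex and `-γ* √(1 - d₁² - d₂²)` strictly convex, so `R(κ, ·)` has a
unique minimizer. It is off the circle, where the square root has infinite slope, and off the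
axis `d₂ = 0`, where the `d₂`-derivative of `R(κ, ·)` is `-γ₁ < 0`. Monotonicity and sublinearity
of `F` give `|T_∞(κ) - T_∞(κ')| ≤ |κ - κ'|` and `T_∞(κ) ≥ κ - M`, while evaluating `R(0, ·)` at
the origin gives `T_∞(0) ≤ -γ* < 0`.
-/

open MeasureTheory ProbabilityTheory Real Filter Set Topology

noncomputable section

namespace MaxMargin

/-- The standard Gaussian measure on `ℝ`. -/
def stdG : Measure ℝ := gaussianReal 0 1

/-- The function `F_κ(c₁,c₂) = (E[((κ − c₁·Y·G − c₂·Z)₊)²])^{1/2}` where `G, Z` are independent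
standard Gaussians and, conditionally on `G`, `Y ∈ {+1,−1}` with `P(Y = +1 | G) = f(G)`. -/
def Fk (f : ℝ → ℝ) (κ c₁ c₂ : ℝ) : ℝ :=
  Real.sqrt (∫ g, ∫ z,
    (f g * (max (κ - c₁ * g - c₂ * z) 0) ^ 2
      + (1 - f g) * (max (κ + c₁ * g - c₂ * z) 0) ^ 2) ∂stdG ∂stdG)

/-- Non-degeneracy of `f`: the variable `T = Y·G` satisfies `P(T < x) > 0` and `P(T > x) > 0`
for every `x ∈ ℝ`. -/
def NonDeg (f : ℝ → ℝ) : Prop :=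
  ∀ x : ℝ,
    (0 < ∫ g, (f g * (if g < x then (1:ℝ) else 0)
          + (1 - f g) * (if -g < x then (1:ℝ) else 0)) ∂stdG) ∧
    (0 < ∫ g, (f g * (if x < g then (1:ℝ) else 0)
          + (1 - f g) * (if x < -g then (1:ℝ) else 0)) ∂stdG)


/-- `R(κ̄, d₁, d₂) = F_{κ̄}(√ψ₂·γ₁·d₁, √ψ₂·γ₁·d₂) − γ₁·d₂ − γ*·√(1 − d₁² − d₂²)`. -/
def Rwide (f₀ : ℝ → ℝ) (ψ₂ γ₁ γs κ : ℝ) (d : ℝ × ℝ) : ℝ :=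
  Fk f₀ κ (Real.sqrt ψ₂ * γ₁ * d.1) (Real.sqrt ψ₂ * γ₁ * d.2)
    - γ₁ * d.2 - γs * Real.sqrt (1 - d.1 ^ 2 - d.2 ^ 2)

/-- The constraint set `{(d₁,d₂) : d₁² + d₂² ≤ 1, d₂ ≥ 0}`. -/
def Kwide : Set (ℝ × ℝ) := {d : ℝ × ℝ | d.1 ^ 2 + d.2 ^ 2 ≤ 1 ∧ 0 ≤ d.2}

/-- `T_∞(κ̄) = min{R(κ̄,d₁,d₂) : (d₁,d₂) ∈ K}`. -/
def Twide (f₀ : ℝ → ℝ) (ψ₂ γ₁ γs κ : ℝ) : ℝ :=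
  sInf (Rwide f₀ ψ₂ γ₁ γs κ '' Kwide)

/-- The properties of `(κ, c) ↦ F_κ(c₁, c₂)` on which the optimization argument rests: joint
sublinearity, monotonicity in `κ`, and smoothness in `c` with `∂F_κ/∂c₂ = 0` where `c₂ = 0`. -/
structure IsMarginLoss (F : ℝ → ℝ × ℝ → ℝ) : Prop where
  apply_zero : ∀ {κ}, 0 ≤ κ → F κ 0 = κ
  sublinear : ∀ {a b : ℝ}, 0 ≤ a → 0 ≤ b → ∀ κ κ' c c',
    F (a * κ + b * κ') (a • c + b • c') ≤ a * F κ c + b * F κ' c'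
  monotone : ∀ c, Monotone (F · c)
  strictMonoOn : ∀ c, StrictMonoOn (F · c) (Ioi 0)
  differentiableAt : ∀ {κ}, 0 < κ → ∀ c, DifferentiableAt ℝ (F κ) c
  fderiv_snd : ∀ {κ}, 0 < κ → ∀ a : ℝ, fderiv ℝ (F κ) (a, 0) (0, 1) = 0

section SolidNorm

variable {E : Type*} [NormedAddCommGroup E] [Lattice E] [IsOrderedAddMonoid E] [HasSolidNorm E]

lemma norm_le_norm_of_nonneg_of_le {x y : E} (hx : 0 ≤ x) (hxy : x ≤ y) : ‖x‖ ≤ ‖y‖ :=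
  norm_le_norm_of_abs_le_abs (by rwa [abs_of_nonneg hx, abs_of_nonneg (hx.trans hxy)])

lemma norm_posPart_mono {x y : E} (h : x ≤ y) : ‖x⁺‖ ≤ ‖y⁺‖ :=
  norm_le_norm_of_nonneg_of_le (posPart_nonneg x) (posPart_mono h)

lemma norm_posPart_add_le (x y : E) : ‖(x + y)⁺‖ ≤ ‖x⁺‖ + ‖y⁺‖ := by
  have h : (x + y)⁺ ≤ x⁺ + y⁺ := sup_le (add_le_add (le_posPart x) (le_posPart y))
    (add_nonneg (posPart_nonneg x) (posPart_nonneg y))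
  exact (norm_le_norm_of_nonneg_of_le (posPart_nonneg _) h).trans (norm_add_le _ _)

lemma norm_posPart_smul_le [NormedSpace ℝ E] [PosSMulMono ℝ E] {a : ℝ} (ha : 0 ≤ a) (x : E) :
    ‖(a • x)⁺‖ ≤ a * ‖x⁺‖ := by
  rw [← Real.norm_of_nonneg ha, ← norm_smul, Real.norm_of_nonneg ha]
  exact norm_le_norm_of_nonneg_of_le (posPart_nonneg _)
    (sup_le (smul_le_smul_of_nonneg_left (le_posPart x) ha) (smul_nonneg ha (posPart_nonneg x)))

end SolidNorm

section Slack

variable {E : Type*} [NormedAddCommGroup E] [NormedSpace ℝ E]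

/-- The slack `κ e - c₁ x - c₂ z` of a margin constraint, as a vector; `e` plays the role of the
constant function `1`. -/
def slack (e x z : E) (κ : ℝ) (c : ℝ × ℝ) : E := κ • e - c.1 • x - c.2 • z

lemma slack_sublinear (e x z : E) (a b κ κ' : ℝ) (c c' : ℝ × ℝ) :
    slack e x z (a * κ + b * κ') (a • c + b • c') =
      a • slack e x z κ c + b • slack e x z κ' c' := by
  simp only [slack, Prod.fst_add, Prod.snd_add, Prod.smul_fst, Prod.smul_snd, smul_eq_mul]
  module

lemma monotone_slack [PartialOrder E] [IsOrderedAddMonoid E] [PosSMulMono ℝ E] {e : E}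
    (he : 0 ≤ e) (x z : E) (c : ℝ × ℝ) : Monotone (slack e x z · c) := fun κ κ' h => by
  simp only [slack]
  gcongr

lemma hasFDerivAt_slack (e x z : E) (κ : ℝ) (c : ℝ × ℝ) :
    HasFDerivAt (slack e x z κ)
      (-(ContinuousLinearMap.fst ℝ ℝ ℝ).smulRight x - (ContinuousLinearMap.snd ℝ ℝ ℝ).smulRight z)
      c := by
  have hfst := (hasFDerivAt_fst (𝕜 := ℝ) (p := c)).smul_const x
  have hsnd := (hasFDerivAt_snd (𝕜 := ℝ) (p := c)).smul_const z
  exact (hfst.const_sub (κ • e)).sub hsnd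

end Slack

section HilbertLattice

variable {E : Type*} [NormedAddCommGroup E] [InnerProductSpace ℝ E] [Lattice E]
  [IsOrderedAddMonoid E] [HasSolidNorm E]

lemma inner_nonneg_of_nonneg {x y : E} (hx : 0 ≤ x) (hy : 0 ≤ y) : 0 ≤ inner ℝ x y := by
  have h : ‖x - y‖ ≤ ‖x + y‖ := norm_le_norm_of_abs_le_abs <| by
    rw [abs_of_nonneg (add_nonneg hx hy)]
    simpa only [sub_eq_add_neg, abs_neg, abs_of_nonneg hx, abs_of_nonneg hy]
      using abs_add_le x (-y)
  have := pow_le_pow_left₀ (norm_nonneg _) h 2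
  rw [norm_sub_sq_real, norm_add_sq_real] at this
  linarith

lemma norm_posPart_lt_norm_posPart {x y : E} (hxy : x ≤ y) (hne : x⁺ ≠ y⁺) :
    ‖x⁺‖ < ‖y⁺‖ := by
  have hw : 0 ≤ y⁺ - x⁺ := sub_nonneg.2 (posPart_mono hxy)
  have hinner : 0 ≤ inner ℝ x⁺ (y⁺ - x⁺) := inner_nonneg_of_nonneg (posPart_nonneg x) hw
  have hnorm : 0 < ‖y⁺ - x⁺‖ := norm_pos_iff.2 (sub_ne_zero.2 hne.symm)
  have hsq : ‖y⁺‖ ^ 2 = ‖x⁺‖ ^ 2 + 2 * inner ℝ x⁺ (y⁺ - x⁺) + ‖y⁺ - x⁺‖ ^ 2 := by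
    rw [← norm_add_sq_real, add_sub_cancel]
  refine lt_of_pow_lt_pow_left₀ 2 (norm_nonneg _) ?_
  nlinarith

lemma norm_posPart_add_sq_le (x h : E) :
    ‖(x + h)⁺‖ ^ 2 ≤ ‖x⁺‖ ^ 2 + 2 * inner ℝ x⁺ h + ‖h‖ ^ 2 := by
  rw [← norm_add_sq_real]
  gcongr
  refine norm_le_norm_of_abs_le_abs ?_
  rw [abs_of_nonneg (posPart_nonneg _)]
  exact sup_le ((add_le_add_left (le_posPart x) h).trans (le_abs_self _)) (abs_nonneg _)

lemma abs_norm_posPart_sq_sub_le (x y : E) :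
    |‖y⁺‖ ^ 2 - ‖x⁺‖ ^ 2 - 2 * inner ℝ x⁺ (y - x)| ≤ 3 * ‖y - x‖ ^ 2 := by
  have hupper := norm_posPart_add_sq_le x (y - x)
  have hlower := norm_posPart_add_sq_le y (x - y)
  rw [add_sub_cancel] at hupper hlower
  rw [← neg_sub y x, inner_neg_right, norm_neg] at hlower
  have hinner : -‖y - x‖ ^ 2 ≤ inner ℝ (y⁺ - x⁺) (y - x) := by
    refine (neg_le_neg ?_).trans (neg_le_of_abs_le (abs_real_inner_le_norm _ _))
    rw [sq]
    gcongr
    exact norm_sup_sub_sup_le_norm y x 0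
  rw [inner_sub_left] at hinner
  rw [abs_le]
  constructor <;> nlinarith [sq_nonneg ‖y - x‖]

lemma hasFDerivAt_norm_posPart_sq (x : E) :
    HasFDerivAt (fun x : E => ‖x⁺‖ ^ 2) (2 • innerSL ℝ x⁺) x := by
  have hbigO : (fun y => ‖y⁺‖ ^ 2 - ‖x⁺‖ ^ 2 - (2 • innerSL ℝ x⁺) (y - x))
      =O[𝓝 x] fun y => ‖y - x‖ ^ 2 := by
    refine .of_bound 3 (Eventually.of_forall fun y => ?_)
    simpa using abs_norm_posPart_sq_sub_le x y
  exact .of_isLittleO (hbigO.trans_isLittleO (Asymptotics.isLittleO_pow_sub_sub x one_lt_two))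

lemma hasFDerivAt_norm_posPart {x : E} (hx : x⁺ ≠ 0) :
    HasFDerivAt (fun x : E => ‖x⁺‖) (‖x⁺‖⁻¹ • innerSL ℝ x⁺) x := by
  have hsqrt := (hasFDerivAt_norm_posPart_sq x).sqrt (pow_ne_zero 2 (norm_ne_zero_iff.2 hx))
  simp only [Real.sqrt_sq (norm_nonneg _)] at hsqrt
  convert hsqrt using 1
  ext h
  simp only [smul_apply, smul_eq_mul, nsmul_eq_mul, Nat.cast_ofNat]
  field_simp

theorem isMarginLoss_norm_posPart_slack [PosSMulMono ℝ E] {e x z : E} (he : 0 ≤ e)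
    (hnorm : ‖e‖ = 1) (hz : ∀ κ a, inner ℝ (slack e x z κ (a, 0))⁺ z = 0)
    (hinj : ∀ c, InjOn (fun κ => (slack e x z κ c)⁺) (Ioi 0)) :
    IsMarginLoss fun κ c => ‖(slack e x z κ c)⁺‖ := by
  have hpos {κ : ℝ} (hκ : 0 < κ) (c : ℝ × ℝ) : (slack e x z κ c)⁺ ≠ 0 := fun h0 => by
    have hle := posPart_mono (monotone_slack he x z c (half_lt_self hκ).le)
    have heq : (slack e x z (κ / 2) c)⁺ = (slack e x z κ c)⁺ :=
      hle.antisymm (h0.trans_le (posPart_nonneg _))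
    exact (half_lt_self hκ).ne (hinj c (half_pos hκ) hκ heq)
  have hderiv {κ : ℝ} (hκ : 0 < κ) (c : ℝ × ℝ) :=
    (hasFDerivAt_norm_posPart (hpos hκ c)).comp c (hasFDerivAt_slack e x z κ c)
  refine ⟨fun {κ} hκ => ?_, fun {a b} ha hb κ κ' c c' => ?_, fun c κ κ' h => ?_,
    fun c κ hκ κ' hκ' h => ?_, fun hκ c => (hderiv hκ c).differentiableAt, fun {κ} hκ a => ?_⟩
  · simp only [slack, Prod.fst_zero, Prod.snd_zero, zero_smul, sub_zero]
    rw [posPart_of_nonneg (smul_nonneg hκ he), norm_smul, hnorm, mul_one, Real.norm_of_nonneg hκ]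
  · rw [slack_sublinear]
    exact (norm_posPart_add_le _ _).trans
      (add_le_add (norm_posPart_smul_le ha _) (norm_posPart_smul_le hb _))
  · exact norm_posPart_mono (monotone_slack he x z c h)
  · exact norm_posPart_lt_norm_posPart (monotone_slack he x z c h.le)
      fun heq => h.ne (hinj c hκ hκ' heq)
  · change fderiv ℝ ((fun v : E => ‖v⁺‖) ∘ slack e x z κ) (a, 0) (0, 1) = 0
    rw [(hderiv hκ (a, 0)).fderiv]
    simp [hz]

end HilbertLattice

section Probability

variable {Ω : Type*} [MeasurableSpace Ω] {μ : Measure Ω}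

instance posSMulMono_Lp : PosSMulMono ℝ (Lp ℝ 2 μ) where
  smul_le_smul_of_nonneg_left a ha u v huv := by
    rw [← Lp.coeFn_le] at huv ⊢
    filter_upwards [huv, Lp.coeFn_smul a u, Lp.coeFn_smul a v] with ω h hu hv
    rw [hu, hv]
    exact mul_le_mul_of_nonneg_left h ha

lemma coeFn_posPart_toLp {f : Ω → ℝ} (hf : MemLp f 2 μ) :
    ⇑((hf.toLp f)⁺) =ᵐ[μ] fun ω => max (f ω) 0 := by
  filter_upwards [Lp.coeFn_sup (hf.toLp f) 0, hf.coeFn_toLp, Lp.coeFn_zero ℝ 2 μ] with ω h h1 h2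
  rw [posPart_def, h, Pi.sup_apply, h1, h2, Pi.zero_apply]

lemma norm_posPart_toLp {f : Ω → ℝ} (hf : MemLp f 2 μ) :
    ‖(hf.toLp f)⁺‖ = √(∫ ω, max (f ω) 0 ^ 2 ∂μ) := by
  rw [← Real.sqrt_sq (norm_nonneg (hf.toLp f)⁺), ← real_inner_self_eq_norm_sq, L2.inner_def]
  congr 1
  refine integral_congr_ae ?_
  filter_upwards [coeFn_posPart_toLp hf] with ω h
  rw [h, real_inner_self_eq_norm_sq, Real.norm_eq_abs, sq_abs]

/-- The root-mean-square margin violation `(E[((κ - c₁ T - c₂ Z)₊)²])^{1/2}` of random variables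
`T` and `Z`; for `T = Y₀ G` it is `F_κ(c₁, c₂)`. -/
def marginLoss (μ : Measure Ω) (T Z : Ω → ℝ) (κ : ℝ) (c : ℝ × ℝ) : ℝ :=
  √(∫ ω, max (κ - c.1 * T ω - c.2 * Z ω) 0 ^ 2 ∂μ)

variable {T Z : Ω → ℝ}

lemma memLp_slack [IsFiniteMeasure μ] (hT : MemLp T 2 μ) (hZ : MemLp Z 2 μ) (κ : ℝ) (c : ℝ × ℝ) :
    MemLp (fun ω => κ - c.1 * T ω - c.2 * Z ω) 2 μ :=
  ((memLp_const κ).sub (hT.const_mul c.1)).sub (hZ.const_mul c.2)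

lemma toLp_slack [IsFiniteMeasure μ] (hT : MemLp T 2 μ) (hZ : MemLp Z 2 μ) (κ : ℝ) (c : ℝ × ℝ) :
    (memLp_slack hT hZ κ c).toLp _ =
      slack (Lp.const 2 μ 1) (hT.toLp T) (hZ.toLp Z) κ c := by
  rw [slack, ← MemLp.toLp_const, ← MemLp.toLp_const_smul, ← MemLp.toLp_const_smul,
    ← MemLp.toLp_const_smul, ← MemLp.toLp_sub, ← MemLp.toLp_sub]
  congr 1
  ext ω
  simp

lemma inner_posPart_slack_eq_zero [IsFiniteMeasure μ] (hT : MemLp T 2 μ) (hZ : MemLp Z 2 μ)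
    (hindep : IndepFun T Z μ) (hcentered : ∫ ω, Z ω ∂μ = 0) (κ a : ℝ) :
    inner ℝ (slack (Lp.const 2 μ 1) (hT.toLp T) (hZ.toLp Z) κ (a, 0))⁺
      (hZ.toLp Z) = 0 := by
  rw [← toLp_slack hT hZ, L2.inner_def]
  have hindep' : IndepFun (fun ω => max (κ - a * T ω) 0) Z μ :=
    hindep.comp (φ := fun t => max (κ - a * t) 0) (ψ := id) (by fun_prop) measurable_id
  calc ∫ ω, inner ℝ ((((memLp_slack hT hZ κ (a, 0)).toLp _)⁺ : Lp ℝ 2 μ) ω) (hZ.toLp Z ω) ∂μ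
      = ∫ ω, max (κ - a * T ω) 0 * Z ω ∂μ := by
        refine integral_congr_ae ?_
        filter_upwards [coeFn_posPart_toLp (memLp_slack hT hZ κ (a, 0)), hZ.coeFn_toLp]
          with ω h1 h2
        rw [h1, h2]
        simp [mul_comm]
    _ = (∫ ω, max (κ - a * T ω) 0 ∂μ) * ∫ ω, Z ω ∂μ :=
        hindep'.integral_fun_mul_eq_mul_integral
          ((memLp_const κ).sub (hT.const_mul a)).pos_part.1 hZ.1
    _ = 0 := by rw [hcentered, mul_zero]

lemma measure_slack_pos [IsProbabilityMeasure μ] (hZ : Integrable Z μ)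
    (hindep : IndepFun T Z μ) (hcentered : ∫ ω, Z ω ∂μ = 0)
    (hsmall : ∀ ε > 0, 0 < μ {ω | |T ω| < ε}) {κ : ℝ} (hκ : 0 < κ) (c : ℝ × ℝ) :
    0 < μ {ω | 0 < κ - c.1 * T ω - c.2 * Z ω} := by
  obtain ⟨ε, hε, hεκ⟩ := exists_pos_mul_lt hκ |c.1|
  have hZneg : 0 < μ {ω | c.2 * Z ω ≤ 0} := by
    simpa [integral_const_mul, hcentered] using measure_le_integral_pos (hZ.const_mul c.2)
  have hprod : μ ({ω | |T ω| < ε} ∩ {ω | c.2 * Z ω ≤ 0})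
      = μ {ω | |T ω| < ε} * μ {ω | c.2 * Z ω ≤ 0} :=
    hindep.measure_inter_preimage_eq_mul {t | |t| < ε} {z | c.2 * z ≤ 0}
      (measurableSet_lt (by fun_prop) (by fun_prop))
      (measurableSet_le (by fun_prop) (by fun_prop))
  refine (hprod ▸ ENNReal.mul_pos (hsmall ε hε).ne' hZneg.ne').trans_le (measure_mono ?_)
  rintro ω ⟨hTω : |T ω| < ε, hZω : c.2 * Z ω ≤ 0⟩
  have hT : c.1 * T ω < κ :=
    calc c.1 * T ω ≤ |c.1| * |T ω| := (le_abs_self _).trans_eq (abs_mul _ _)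
      _ ≤ |c.1| * ε := by gcongr
      _ < κ := hεκ
  change 0 < κ - c.1 * T ω - c.2 * Z ω
  linarith

lemma injOn_posPart_slack [IsFiniteMeasure μ] (hT : MemLp T 2 μ) (hZ : MemLp Z 2 μ)
    (hpos : ∀ κ > 0, ∀ c : ℝ × ℝ, 0 < μ {ω | 0 < κ - c.1 * T ω - c.2 * Z ω}) (c : ℝ × ℝ) :
    InjOn (fun κ => (slack (Lp.const 2 μ 1) (hT.toLp T) (hZ.toLp Z) κ c)⁺)
      (Ioi 0) := by
  intro κ hκ κ' _ heq
  simp only [← toLp_slack hT hZ] at heq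
  have hae : ∀ᵐ ω ∂μ, max (κ - c.1 * T ω - c.2 * Z ω) 0 = max (κ' - c.1 * T ω - c.2 * Z ω) 0 := by
    filter_upwards [coeFn_posPart_toLp (memLp_slack hT hZ κ c),
      coeFn_posPart_toLp (memLp_slack hT hZ κ' c)] with ω h h'
    rw [← h, ← h', heq]
  obtain ⟨ω, hω, h⟩ := (frequently_ae_iff.2 (hpos κ hκ c).ne').and_eventually hae |>.exists
  grind

theorem isMarginLoss_marginLoss [IsProbabilityMeasure μ] (hT : MemLp T 2 μ) (hZ : MemLp Z 2 μ)
    (hindep : IndepFun T Z μ) (hcentered : ∫ ω, Z ω ∂μ = 0)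
    (hsmall : ∀ ε > 0, 0 < μ {ω | |T ω| < ε}) : IsMarginLoss (marginLoss μ T Z) := by
  have hnorm : marginLoss μ T Z = fun κ c =>
      ‖(slack (Lp.const 2 μ 1) (hT.toLp T) (hZ.toLp Z) κ c)⁺‖ := by
    ext κ c
    rw [← toLp_slack hT hZ, norm_posPart_toLp, marginLoss]
  rw [hnorm]
  refine isMarginLoss_norm_posPart_slack ?_ ?_ (inner_posPart_slack_eq_zero hT hZ hindep hcentered)
    (injOn_posPart_slack hT hZ fun κ hκ c =>
      measure_slack_pos (hZ.integrable one_le_two) hindep hcentered hsmall hκ c)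
  · rw [← Lp.coeFn_nonneg]
    filter_upwards [Lp.coeFn_const 2 μ (1 : ℝ)] with ω h
    exact zero_le_one.trans_eq h.symm
  · simp [Lp.norm_const]

end Probability

/-- The objective `R(κ̄, d) = F_κ̄(s d) - γ₁ d₂ - γ* √(1 - d₁² - d₂²)` for a general function `F`
in place of `F_κ̄` and a general scale `s` in place of `√ψ₂ γ₁`. -/
def wideObjective (F : ℝ → ℝ × ℝ → ℝ) (s γ₁ γs κ : ℝ) (d : ℝ × ℝ) : ℝ :=
  F κ (s • d) - γ₁ * d.2 - γs * √(1 - d.1 ^ 2 - d.2 ^ 2)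

/-- The optimal value `T_∞(κ̄)` of `wideObjective` over the half-disk `Kwide`. -/
def wideValue (F : ℝ → ℝ × ℝ → ℝ) (s γ₁ γs κ : ℝ) : ℝ :=
  sInf (wideObjective F s γ₁ γs κ '' Kwide)

section HalfDisk

lemma mul_add_mul_sq_add_sq {a b : ℝ} (hab : a + b = 1) (d e : ℝ × ℝ) :
    (a • d + b • e).1 ^ 2 + (a • d + b • e).2 ^ 2 + a * b * ((d.1 - e.1) ^ 2 + (d.2 - e.2) ^ 2) =
      a * (d.1 ^ 2 + d.2 ^ 2) + b * (e.1 ^ 2 + e.2 ^ 2) := by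
  obtain rfl : b = 1 - a := by linarith
  simp only [Prod.fst_add, Prod.snd_add, Prod.smul_fst, Prod.smul_snd, smul_eq_mul]
  ring

lemma convex_Kwide : Convex ℝ Kwide := by
  intro d hd e he a b ha hb hab
  refine ⟨?_, add_nonneg (mul_nonneg ha hd.2) (mul_nonneg hb he.2)⟩
  have hsq := mul_add_mul_sq_add_sq hab d e
  have hgap : 0 ≤ a * b * ((d.1 - e.1) ^ 2 + (d.2 - e.2) ^ 2) := by positivity
  nlinarith [hd.1, he.1]

lemma isCompact_Kwide : IsCompact Kwide := by
  have hclosed : IsClosed Kwide :=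
    (isClosed_le (f := fun d : ℝ × ℝ => d.1 ^ 2 + d.2 ^ 2) (by fun_prop) continuous_const).inter
      (isClosed_le continuous_const continuous_snd)
  refine (isCompact_Icc (a := ((-1, -1) : ℝ × ℝ)) (b := (1, 1))).of_isClosed_subset hclosed
    fun d hd => ?_
  have h1 : |d.1| ≤ 1 := (sq_le_one_iff_abs_le_one _).1 (by linarith [hd.1, sq_nonneg d.2])
  have h2 : |d.2| ≤ 1 := (sq_le_one_iff_abs_le_one _).1 (by linarith [hd.1, sq_nonneg d.1])
  exact ⟨⟨(abs_le.1 h1).1, (abs_le.1 h2).1⟩, ⟨(abs_le.1 h1).2, (abs_le.1 h2).2⟩⟩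

lemma zero_mem_Kwide : (0 : ℝ × ℝ) ∈ Kwide := by simp [Kwide]

lemma Kwide_mem_nhds {d : ℝ × ℝ} (hdisk : d.1 ^ 2 + d.2 ^ 2 < 1) (hpos : 0 < d.2) :
    Kwide ∈ 𝓝 d := by
  have hdisk' : ∀ᶠ e : ℝ × ℝ in 𝓝 d, e.1 ^ 2 + e.2 ^ 2 < 1 :=
    ContinuousAt.eventually_lt (by fun_prop) continuousAt_const hdisk
  have hpos' : ∀ᶠ e : ℝ × ℝ in 𝓝 d, 0 < e.2 :=
    continuousAt_const.eventually_lt continuousAt_snd hpos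
  filter_upwards [hdisk', hpos'] with e h1 h2 using ⟨h1.le, h2.le⟩

lemma strictConcaveOn_sqrt_one_sub_sq_sub_sq :
    StrictConcaveOn ℝ Kwide fun d : ℝ × ℝ => √(1 - d.1 ^ 2 - d.2 ^ 2) := by
  refine ⟨convex_Kwide, fun d hd e he hne a b ha hb hab => ?_⟩
  have hdist : 0 < (d.1 - e.1) ^ 2 + (d.2 - e.2) ^ 2 := by
    by_contra! h
    refine hne (Prod.ext ?_ ?_) <;> nlinarith [sq_nonneg (d.1 - e.1), sq_nonneg (d.2 - e.2)]
  have hd0 : 0 ≤ 1 - d.1 ^ 2 - d.2 ^ 2 := by linarith [hd.1]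
  have he0 : 0 ≤ 1 - e.1 ^ 2 - e.2 ^ 2 := by linarith [he.1]
  refine (strictConcaveOn_sqrt.concaveOn.2 hd0 he0 ha.le hb.le hab).trans_lt ?_
  refine Real.sqrt_lt_sqrt (by positivity) ?_
  have hsq := mul_add_mul_sq_add_sq hab d e
  have hgap := mul_pos (mul_pos ha hb) hdist
  simp only [smul_eq_mul]
  linarith

lemma hasFDerivAt_sqrt_one_sub_sq_sub_sq {d : ℝ × ℝ} (hd : d.1 ^ 2 + d.2 ^ 2 < 1) :
    HasFDerivAt (fun d : ℝ × ℝ => √(1 - d.1 ^ 2 - d.2 ^ 2))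
      (-(√(1 - d.1 ^ 2 - d.2 ^ 2))⁻¹ •
        (d.1 • ContinuousLinearMap.fst ℝ ℝ ℝ + d.2 • ContinuousLinearMap.snd ℝ ℝ ℝ)) d := by
  have hpos : 0 < 1 - d.1 ^ 2 - d.2 ^ 2 := by linarith
  have hfst := (hasFDerivAt_fst (𝕜 := ℝ) (p := d)).pow 2
  have hsnd := (hasFDerivAt_snd (𝕜 := ℝ) (p := d)).pow 2
  refine (((hfst.const_sub 1).sub hsnd).sqrt hpos.ne').congr_fderiv ?_
  ext <;> simp <;> ring

-- Moving inward by `ε²` costs `O(ε²)` in the convex term and gains at least `γs * ε`.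
lemma sq_add_sq_lt_one_of_isMinOn {G : ℝ × ℝ → ℝ} (hG : ConvexOn ℝ Kwide G) {γs : ℝ}
    (hγs : 0 < γs) {d : ℝ × ℝ} (hd : d ∈ Kwide)
    (hmin : IsMinOn (fun d => G d - γs * √(1 - d.1 ^ 2 - d.2 ^ 2)) Kwide d) :
    d.1 ^ 2 + d.2 ^ 2 < 1 := by
  refine hd.1.lt_of_ne fun hcircle => ?_
  have hbound {ε : ℝ} (hε : 0 < ε) (hε1 : ε ≤ 1) : γs ≤ ε * (G 0 - G d) := by
    have hε2 : ε ^ 2 ≤ 1 := pow_le_one₀ hε.le hε1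
    have hmem : (1 - ε ^ 2) • d ∈ Kwide :=
      (convex_Kwide.starConvex zero_mem_Kwide).smul_mem hd (sub_nonneg.2 hε2)
        (sub_le_self _ (sq_nonneg ε))
    have hconv : G ((1 - ε ^ 2) • d) ≤ (1 - ε ^ 2) * G d + ε ^ 2 * G 0 := by
      simpa using hG.2 hd zero_mem_Kwide (sub_nonneg.2 hε2) (sq_nonneg ε) (sub_add_cancel _ _)
    have hsqrt : ε ≤ √(1 - ((1 - ε ^ 2) • d).1 ^ 2 - ((1 - ε ^ 2) • d).2 ^ 2) := by
      refine Real.le_sqrt_of_sq_le ?_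
      calc ε ^ 2 ≤ 1 - (1 - ε ^ 2) ^ 2 := by nlinarith [sq_nonneg ε]
        _ = _ := by
          simp only [Prod.smul_fst, Prod.smul_snd, smul_eq_mul]
          linear_combination (1 - ε ^ 2) ^ 2 * hcircle
    have hle := hmin hmem
    simp only [mem_ofPred_eq] at hle
    rw [show 1 - d.1 ^ 2 - d.2 ^ 2 = 0 by linarith, Real.sqrt_zero] at hle
    nlinarith
  obtain ⟨ε, hε, hlt⟩ := exists_pos_mul_lt hγs |G 0 - G d|
  have hmin1 : 0 < min ε 1 := lt_min hε one_pos
  have := hbound hmin1 (min_le_right _ _)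
  nlinarith [min_le_left ε 1, le_abs_self (G 0 - G d), abs_nonneg (G 0 - G d)]

end HalfDisk

lemma isMinOn_of_convexOn_of_hasFDerivAt_zero {E : Type*} [NormedAddCommGroup E] [NormedSpace ℝ E]
    {f : E → ℝ} {s : Set E} {a : E} (hf : ConvexOn ℝ s f) (ha : a ∈ s)
    (hderiv : HasFDerivAt f (0 : E →L[ℝ] ℝ) a) : IsMinOn f s a := by
  intro b hb
  have hline : ConvexOn ℝ (AffineMap.lineMap a b ⁻¹' s) (f ∘ AffineMap.lineMap (k := ℝ) a b) :=
    hf.comp_affineMap _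
  have hderiv0 : HasDerivAt (f ∘ AffineMap.lineMap (k := ℝ) a b) 0 0 := by
    have h : HasFDerivAt f (0 : E →L[ℝ] ℝ) (AffineMap.lineMap a b (0 : ℝ)) := by simpa using hderiv
    simpa using h.comp_hasDerivAt (0 : ℝ) AffineMap.hasDerivAt_lineMap
  have hslope := hline.le_slope_of_hasDerivAt (x := 0) (y := 1) (by simpa) (by simpa) one_pos
    hderiv0
  simpa [slope] using hslope

lemma wideValue_eq_of_isMinOn {F : ℝ → ℝ × ℝ → ℝ} {s γ₁ γs κ : ℝ} {d : ℝ × ℝ} (hd : d ∈ Kwide)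
    (hmin : IsMinOn (wideObjective F s γ₁ γs κ) Kwide d) :
    wideValue F s γ₁ γs κ = wideObjective F s γ₁ γs κ d :=
  IsLeast.csInf_eq ⟨mem_image_of_mem _ hd, forall_mem_image.2 hmin⟩

namespace IsMarginLoss

variable {F : ℝ → ℝ × ℝ → ℝ}

lemma convexOn (hF : IsMarginLoss F) (κ : ℝ) : ConvexOn ℝ univ (F κ) := by
  refine ⟨convex_univ, fun c _ c' _ a b ha hb hab => ?_⟩
  have h := hF.sublinear ha hb κ κ c c'
  rwa [← add_mul, hab, one_mul] at h

lemma continuous (hF : IsMarginLoss F) (κ : ℝ) : Continuous (F κ) :=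
  continuousOn_univ.1 ((hF.convexOn κ).continuousOn isOpen_univ)

lemma apply_add_le (hF : IsMarginLoss F) (κ κ' : ℝ) (c c' : ℝ × ℝ) :
    F (κ + κ') (c + c') ≤ F κ c + F κ' c' := by
  simpa using hF.sublinear zero_le_one zero_le_one κ κ' c c'

lemma apply_le_add_dist (hF : IsMarginLoss F) (κ κ' : ℝ) (c : ℝ × ℝ) :
    F κ c ≤ F κ' c + dist κ κ' :=
  calc F κ c ≤ F (κ' + dist κ κ') (c + 0) := by
        rw [add_zero]
        exact hF.monotone c (by linarith [le_abs_self (κ - κ'), Real.dist_eq κ κ'])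
    _ ≤ F κ' c + dist κ κ' :=
        (hF.apply_add_le _ _ _ _).trans_eq (by rw [hF.apply_zero dist_nonneg])

variable (s γ₁ γs : ℝ)

lemma convexOn_smul_sub_mul_snd (hF : IsMarginLoss F) (κ : ℝ) :
    ConvexOn ℝ Kwide fun d => F κ (s • d) - γ₁ * d.2 := by
  have hscaled : ConvexOn ℝ univ fun d : ℝ × ℝ => F κ (s • d) := by
    simpa using! (hF.convexOn κ).comp_linearMap (s • LinearMap.id)
  have hlinear : ConcaveOn ℝ univ fun d : ℝ × ℝ => γ₁ * d.2 :=
    (γ₁ • LinearMap.snd ℝ ℝ ℝ).concaveOn convex_univ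
  exact (hscaled.sub hlinear).subset (subset_univ _) convex_Kwide

lemma continuous_wideObjective (hF : IsMarginLoss F) (κ : ℝ) :
    Continuous (wideObjective F s γ₁ γs κ) := by
  have := hF.continuous κ
  unfold wideObjective
  fun_prop

variable {γs} in
lemma strictConvexOn_wideObjective (hF : IsMarginLoss F) (hγs : 0 < γs) (κ : ℝ) :
    StrictConvexOn ℝ Kwide (wideObjective F s γ₁ γs κ) := by
  refine ⟨convex_Kwide, fun d hd e he hne a b ha hb hab => ?_⟩
  have hconvex := (hF.convexOn_smul_sub_mul_snd s γ₁ κ).2 hd he ha.le hb.le hab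
  have hstrict := mul_lt_mul_of_pos_left
    (strictConcaveOn_sqrt_one_sub_sq_sub_sq.2 hd he hne ha hb hab) hγs
  simp only [smul_eq_mul] at hconvex hstrict
  simp only [wideObjective, smul_eq_mul]
  linarith

lemma exists_isMinOn_wideObjective (hF : IsMarginLoss F) (κ : ℝ) :
    ∃ d ∈ Kwide, IsMinOn (wideObjective F s γ₁ γs κ) Kwide d :=
  isCompact_Kwide.exists_isMinOn ⟨0, zero_mem_Kwide⟩
    (hF.continuous_wideObjective s γ₁ γs κ).continuousOn

lemma hasFDerivAt_wideObjective (hF : IsMarginLoss F) {κ : ℝ} (hκ : 0 < κ) {d : ℝ × ℝ}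
    (hd : d.1 ^ 2 + d.2 ^ 2 < 1) :
    HasFDerivAt (wideObjective F s γ₁ γs κ)
      (s • fderiv ℝ (F κ) (s • d) - γ₁ • ContinuousLinearMap.snd ℝ ℝ ℝ
        + (γs * (√(1 - d.1 ^ 2 - d.2 ^ 2))⁻¹) •
          (d.1 • ContinuousLinearMap.fst ℝ ℝ ℝ + d.2 • ContinuousLinearMap.snd ℝ ℝ ℝ)) d := by
  have hscale : HasFDerivAt (fun d : ℝ × ℝ => s • d) (s • ContinuousLinearMap.id ℝ (ℝ × ℝ)) d :=
    (hasFDerivAt_id d).const_smul s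
  have hloss := (hF.differentiableAt hκ (s • d)).hasFDerivAt.comp d hscale
  have hlinear := (hasFDerivAt_snd (𝕜 := ℝ) (p := d)).const_mul γ₁
  have hsqrt := (hasFDerivAt_sqrt_one_sub_sq_sub_sq hd).const_mul γs
  refine ((hloss.sub hlinear).sub hsqrt).congr_fderiv ?_
  ext <;> simp <;> ring

variable {γ₁} in
lemma snd_pos_of_isMinOn_wideObjective (hF : IsMarginLoss F) (hγ₁ : 0 < γ₁) {κ : ℝ} (hκ : 0 < κ)
    {d : ℝ × ℝ} (hd : d ∈ Kwide) (hdisk : d.1 ^ 2 + d.2 ^ 2 < 1)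
    (hmin : IsMinOn (wideObjective F s γ₁ γs κ) Kwide d) : 0 < d.2 := by
  refine hd.2.lt_of_ne' fun h0 => ?_
  obtain ⟨a, _⟩ := d
  obtain rfl : _ = (0 : ℝ) := h0
  have ha : 0 < 1 - a ^ 2 := by simpa using hdisk
  have htop : (a, √(1 - a ^ 2)) ∈ Kwide :=
    ⟨by simp [Real.sq_sqrt ha.le], Real.sqrt_nonneg _⟩
  have hnonneg := hmin.localize.hasFDerivWithinAt_nonneg
    (hF.hasFDerivAt_wideObjective s γ₁ γs hκ hdisk).hasFDerivWithinAt
    (sub_mem_posTangentConeAt_of_segment_subset (convex_Kwide.segment_subset hd htop))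
  have hvertical : ((a, √(1 - a ^ 2)) - (a, 0) : ℝ × ℝ) = √(1 - a ^ 2) • (0, 1) := by simp
  rw [hvertical, map_smul] at hnonneg
  have hloss : fderiv ℝ (F κ) (s * a, 0) (0, 1) = 0 := hF.fderiv_snd hκ (s * a)
  have hneg := mul_pos (Real.sqrt_pos.2 ha) hγ₁
  simp only [add_apply, sub_apply, smul_apply, ContinuousLinearMap.coe_fst',
    ContinuousLinearMap.coe_snd', Prod.smul_mk, smul_eq_mul, mul_zero, mul_one, hloss] at hnonneg
  linarith

lemma wideValue_le (hF : IsMarginLoss F) {d : ℝ × ℝ} (hd : d ∈ Kwide) (κ : ℝ) :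
    wideValue F s γ₁ γs κ ≤ wideObjective F s γ₁ γs κ d := by
  obtain ⟨e, he, hmin⟩ := hF.exists_isMinOn_wideObjective s γ₁ γs κ
  exact (wideValue_eq_of_isMinOn he hmin).trans_le (hmin hd)

lemma exists_wideObjective_eq_wideValue (hF : IsMarginLoss F) (κ : ℝ) :
    ∃ d ∈ Kwide, wideObjective F s γ₁ γs κ d = wideValue F s γ₁ γs κ := by
  obtain ⟨d, hd, hmin⟩ := hF.exists_isMinOn_wideObjective s γ₁ γs κ
  exact ⟨d, hd, (wideValue_eq_of_isMinOn hd hmin).symm⟩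

lemma strictMonoOn_wideValue (hF : IsMarginLoss F) :
    StrictMonoOn (wideValue F s γ₁ γs) (Ioi 0) := by
  intro κ hκ κ' hκ' hlt
  obtain ⟨d, hd, hval⟩ := hF.exists_wideObjective_eq_wideValue s γ₁ γs κ'
  calc wideValue F s γ₁ γs κ ≤ wideObjective F s γ₁ γs κ d := hF.wideValue_le s γ₁ γs hd κ
    _ < wideObjective F s γ₁ γs κ' d :=
        sub_lt_sub_right (sub_lt_sub_right (hF.strictMonoOn (s • d) hκ hκ' hlt) _) _
    _ = wideValue F s γ₁ γs κ' := hval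

lemma continuous_wideValue (hF : IsMarginLoss F) : Continuous (wideValue F s γ₁ γs) := by
  refine (LipschitzWith.of_le_add fun κ κ' => ?_).continuous
  obtain ⟨d, hd, hval⟩ := hF.exists_wideObjective_eq_wideValue s γ₁ γs κ'
  calc wideValue F s γ₁ γs κ ≤ wideObjective F s γ₁ γs κ d := hF.wideValue_le s γ₁ γs hd κ
    _ ≤ wideObjective F s γ₁ γs κ' d + dist κ κ' := by
        have := hF.apply_le_add_dist κ κ' (s • d)
        unfold wideObjective
        linarith
    _ = wideValue F s γ₁ γs κ' + dist κ κ' := by rw [hval]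

variable {γs} in
lemma wideValue_zero_neg (hF : IsMarginLoss F) (hγs : 0 < γs) : wideValue F s γ₁ γs 0 < 0 := by
  refine (hF.wideValue_le s γ₁ γs zero_mem_Kwide 0).trans_lt ?_
  simpa [wideObjective, hF.apply_zero le_rfl] using hγs

lemma tendsto_wideValue_atTop (hF : IsMarginLoss F) :
    Tendsto (wideValue F s γ₁ γs) atTop atTop := by
  obtain ⟨M, hM⟩ : ∃ M, ∀ d ∈ Kwide,
      F 0 (-(s • d)) + γ₁ * d.2 + γs * √(1 - d.1 ^ 2 - d.2 ^ 2) ≤ M := by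
    have := hF.continuous 0
    obtain ⟨M, hM⟩ := isCompact_Kwide.bddAbove_image
      (f := fun d => F 0 (-(s • d)) + γ₁ * d.2 + γs * √(1 - d.1 ^ 2 - d.2 ^ 2)) (by fun_prop)
    exact ⟨M, forall_mem_image.1 hM⟩
  have hlower (κ : ℝ) (hκ : 0 ≤ κ) : κ - M ≤ wideValue F s γ₁ γs κ := by
    obtain ⟨d, hd, hval⟩ := hF.exists_wideObjective_eq_wideValue s γ₁ γs κ
    have hκle := hF.apply_add_le κ 0 (s • d) (-(s • d))
    rw [add_zero, add_neg_cancel, hF.apply_zero hκ] at hκle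
    have := hM d hd
    rw [← hval, wideObjective]
    linarith
  refine tendsto_atTop_mono' atTop ((eventually_ge_atTop 0).mono hlower) ?_
  exact tendsto_atTop_add_const_right atTop (-M) tendsto_id

variable {γs} in
lemma existsUnique_wideValue_eq_zero (hF : IsMarginLoss F) (hγs : 0 < γs) :
    ∃! κ : ℝ, 0 < κ ∧ wideValue F s γ₁ γs κ = 0 := by
  have hzero := hF.wideValue_zero_neg s γ₁ hγs
  obtain ⟨k, hk, hk0⟩ := (((hF.tendsto_wideValue_atTop s γ₁ γs).eventually_ge_atTop 0).and
    (eventually_ge_atTop 0)).exists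
  obtain ⟨κ, hκ, hval⟩ := intermediate_value_Icc hk0
    (hF.continuous_wideValue s γ₁ γs).continuousOn ⟨hzero.le, hk⟩
  have hκpos : 0 < κ := hκ.1.lt_of_ne fun h => hzero.ne (h ▸ hval)
  exact ⟨κ, ⟨hκpos, hval⟩, fun κ' ⟨hκ', hval'⟩ =>
    (hF.strictMonoOn_wideValue s γ₁ γs).injOn hκ' hκpos (hval'.trans hval.symm)⟩

variable {γs} in
lemma isMinOn_of_fderiv_wideObjective_eq_zero (hF : IsMarginLoss F) (hγs : 0 < γs) {κ : ℝ}
    (hκ : 0 < κ) {d : ℝ × ℝ} (hd : d ∈ Kwide) (hdisk : d.1 ^ 2 + d.2 ^ 2 < 1)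
    (hderiv : fderiv ℝ (wideObjective F s γ₁ γs κ) d = 0) :
    IsMinOn (wideObjective F s γ₁ γs κ) Kwide d := by
  have hdiff := (hF.hasFDerivAt_wideObjective s γ₁ γs hκ hdisk).differentiableAt
  exact isMinOn_of_convexOn_of_hasFDerivAt_zero
    (hF.strictConvexOn_wideObjective s γ₁ hγs κ).convexOn hd (hderiv ▸ hdiff.hasFDerivAt)

end IsMarginLoss

section LabelLaw

instance isProbabilityMeasure_stdG : IsProbabilityMeasure stdG :=
  inferInstanceAs (IsProbabilityMeasure (gaussianReal 0 1))

lemma measurePreserving_neg_stdG : MeasurePreserving (fun g : ℝ => -g) stdG stdG :=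
  ⟨measurable_neg, by rw [stdG, gaussianReal_map_neg, neg_zero]⟩

lemma memLp_id_stdG : MemLp id 2 stdG := memLp_id_gaussianReal 2

/-- The law of `Y G`, where `G` is standard Gaussian and `Y = ±1` with `P(Y = 1 | G) = f(G)`.
Since the Gaussian law is even, `Y G` has density `f(t) + (1 - f(-t))` with respect to it. -/
def labelLaw (f : ℝ → ℝ) : Measure ℝ :=
  stdG.withDensity fun t => ENNReal.ofReal (f t + (1 - f (-t)))

variable {f : ℝ → ℝ}

lemma labelLaw_le (hf01 : ∀ t, f t ∈ Icc (0 : ℝ) 1) : labelLaw f ≤ (2 : ENNReal) • stdG := by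
  rw [labelLaw, ← withDensity_const]
  refine withDensity_mono (.of_forall fun t => ?_)
  rw [ENNReal.ofReal_le_ofNat]
  linarith [(hf01 t).2, (hf01 (-t)).1]

lemma memLp_id_labelLaw (hf01 : ∀ t, f t ∈ Icc (0 : ℝ) 1) : MemLp id 2 (labelLaw f) :=
  (memLp_id_stdG.smul_measure ENNReal.ofNat_ne_top).mono_measure (labelLaw_le hf01)

lemma integral_labelLaw (hf : Measurable f) (hf01 : ∀ t, f t ∈ Icc (0 : ℝ) 1) {φ : ℝ → ℝ}
    (hφ : Integrable φ stdG) :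
    ∫ t, φ t ∂labelLaw f = ∫ g, (f g * φ g + (1 - f g) * φ (-g)) ∂stdG := by
  have hweighted {w ψ : ℝ → ℝ} (hw : Measurable w) (hw01 : ∀ t, w t ∈ Icc (0 : ℝ) 1)
      (hψ : Integrable ψ stdG) : Integrable (fun t => w t * ψ t) stdG :=
    hψ.bdd_mul (c := 1) hw.aestronglyMeasurable <| .of_forall fun t => by
      rw [Real.norm_of_nonneg (hw01 t).1]
      exact (hw01 t).2
  have hflip01 (t : ℝ) : 1 - f t ∈ Icc (0 : ℝ) 1 := Icc.mem_iff_one_sub_mem.1 (hf01 t)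
  have hφneg : Integrable (fun g => φ (-g)) stdG :=
    measurePreserving_neg_stdG.integrable_comp_of_integrable hφ
  calc ∫ t, φ t ∂labelLaw f
      = ∫ t, (f t * φ t + (1 - f (-t)) * φ t) ∂stdG := by
        rw [labelLaw, integral_withDensity_eq_integral_toReal_smul (by fun_prop) (by simp)]
        refine integral_congr_ae (.of_forall fun t => ?_)
        dsimp only
        rw [ENNReal.toReal_ofReal (add_nonneg (hf01 t).1 (hflip01 (-t)).1), smul_eq_mul, add_mul]
    _ = ∫ t, f t * φ t ∂stdG + ∫ t, (1 - f (-t)) * φ t ∂stdG :=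
        integral_add (hweighted hf hf01 hφ)
          (hweighted (by fun_prop) (fun t => hflip01 (-t)) hφ)
    _ = ∫ g, f g * φ g ∂stdG + ∫ g, (1 - f g) * φ (-g) ∂stdG := by
        rw [← measurePreserving_neg_stdG.integral_comp (MeasurableEquiv.neg ℝ).measurableEmbedding
          fun g => (1 - f g) * φ (-g)]
        simp only [neg_neg]
    _ = ∫ g, (f g * φ g + (1 - f g) * φ (-g)) ∂stdG :=
        (integral_add (hweighted hf hf01 hφ) (hweighted (by fun_prop) hflip01 hφneg)).symm

lemma labelLaw_apply_of_neg_mem_iff (hf : Measurable f) (hf01 : ∀ t, f t ∈ Icc (0 : ℝ) 1)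
    {s : Set ℝ} (hs : MeasurableSet s) (hneg : ∀ t, -t ∈ s ↔ t ∈ s) :
    labelLaw f s = stdG s := by
  have : IsFiniteMeasure (labelLaw f) := by
    have : IsFiniteMeasure ((2 : ENNReal) • stdG) := Measure.smul_finite _ ENNReal.ofNat_ne_top
    exact isFiniteMeasure_of_le _ (labelLaw_le hf01)
  have hindicator (t : ℝ) : s.indicator (1 : ℝ → ℝ) (-t) = s.indicator 1 t := by
    classical simp only [indicator_apply, hneg, Pi.one_apply]
  have h := integral_labelLaw hf hf01 (φ := s.indicator 1)
    ((integrable_indicator_iff hs).2 (integrable_const (1 : ℝ)).integrableOn)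
  simp only [hindicator, ← add_mul, add_sub_cancel, one_mul, integral_indicator_one hs] at h
  exact (measureReal_eq_measureReal_iff).1 h

lemma isProbabilityMeasure_labelLaw (hf : Measurable f) (hf01 : ∀ t, f t ∈ Icc (0 : ℝ) 1) :
    IsProbabilityMeasure (labelLaw f) :=
  ⟨by simp [labelLaw_apply_of_neg_mem_iff hf hf01 MeasurableSet.univ]⟩

lemma labelLaw_abs_lt_pos (hf : Measurable f) (hf01 : ∀ t, f t ∈ Icc (0 : ℝ) 1) {ε : ℝ}
    (hε : 0 < ε) : 0 < labelLaw f {t | |t| < ε} := by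
  have hopen : IsOpen {t : ℝ | |t| < ε} := isOpen_lt continuous_abs continuous_const
  rw [labelLaw_apply_of_neg_mem_iff hf hf01 hopen.measurableSet (by simp)]
  have : stdG.IsOpenPosMeasure :=
    (gaussianReal_absolutelyContinuous' 0 one_ne_zero).isOpenPosMeasure
  exact hopen.measure_pos stdG ⟨0, by simpa using hε⟩

lemma prod_stdG_abs_fst_lt_pos (hf : Measurable f) (hf01 : ∀ t, f t ∈ Icc (0 : ℝ) 1) :
    ∀ ε > 0, 0 < (labelLaw f).prod stdG {p | |p.1| < ε} := by
  intro ε hε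
  have hball : MeasurableSet {t : ℝ | |t| < ε} := measurableSet_lt (by fun_prop) (by fun_prop)
  exact (labelLaw_abs_lt_pos hf hf01 hε).trans_eq
    (measurePreserving_fst.measure_preimage hball.nullMeasurableSet).symm

lemma integral_snd_prod_stdG {ν : Measure ℝ} [IsProbabilityMeasure ν] :
    ∫ p : ℝ × ℝ, p.2 ∂ν.prod stdG = 0 :=
  (integral_fun_snd id).trans (by simp [stdG])

lemma Fk_eq_marginLoss (hf : Measurable f) (hf01 : ∀ t, f t ∈ Icc (0 : ℝ) 1) (κ : ℝ)
    (c : ℝ × ℝ) :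
    Fk f κ c.1 c.2 = marginLoss ((labelLaw f).prod stdG) Prod.fst Prod.snd κ c := by
  have := isProbabilityMeasure_labelLaw hf hf01
  have hz (t : ℝ) : Integrable (fun z => max (κ - t - c.2 * z) 0 ^ 2) stdG :=
    ((memLp_const (κ - t)).sub (memLp_id_stdG.const_mul c.2)).pos_part.integrable_sq
  have hprod {ν : Measure ℝ} [IsProbabilityMeasure ν] (hν : MemLp id 2 ν) :
      Integrable (fun p : ℝ × ℝ => max (κ - c.1 * p.1 - c.2 * p.2) 0 ^ 2) (ν.prod stdG) :=
    (memLp_slack (hν.comp_fst stdG) (memLp_id_stdG.comp_snd ν) κ c).pos_part.integrable_sq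
  rw [Fk, marginLoss, integral_prod _ (hprod (memLp_id_labelLaw hf01)),
    integral_labelLaw hf hf01 (hprod memLp_id_stdG).integral_prod_left]
  congr 1
  refine integral_congr_ae (.of_forall fun g => ?_)
  dsimp only
  have hneg := hz (c.1 * -g)
  simp only [mul_neg, sub_neg_eq_add] at hneg ⊢
  rw [integral_add ((hz (c.1 * g)).const_mul _) (hneg.const_mul _), integral_const_mul,
    integral_const_mul]

end LabelLaw

lemma Rwide_eq_wideObjective {f : ℝ → ℝ} (hf : Measurable f) (hf01 : ∀ t, f t ∈ Icc (0 : ℝ) 1)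
    (ψ₂ γ₁ γs κ : ℝ) :
    Rwide f ψ₂ γ₁ γs κ =
      wideObjective (marginLoss ((labelLaw f).prod stdG) Prod.fst Prod.snd) (√ψ₂ * γ₁) γ₁ γs κ := by
  ext d
  rw [wideObjective, ← Fk_eq_marginLoss hf hf01]
  rfl

lemma Twide_eq_wideValue {f : ℝ → ℝ} (hf : Measurable f) (hf01 : ∀ t, f t ∈ Icc (0 : ℝ) 1)
    (ψ₂ γ₁ γs : ℝ) :
    Twide f ψ₂ γ₁ γs =
      wideValue (marginLoss ((labelLaw f).prod stdG) Prod.fst Prod.snd) (√ψ₂ * γ₁) γ₁ γs := by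
  ext κ
  rw [Twide, wideValue, Rwide_eq_wideObjective hf hf01]

theorem statement_18_general {Ω : Type*} [MeasurableSpace Ω] {μ : Measure Ω}
    [IsProbabilityMeasure μ] {T Z : Ω → ℝ} (hT : MemLp T 2 μ) (hZ : MemLp Z 2 μ)
    (hindep : IndepFun T Z μ) (hcentered : ∫ ω, Z ω ∂μ = 0)
    (hsmall : ∀ ε > 0, 0 < μ {ω | |T ω| < ε}) (s : ℝ) {γ₁ γs : ℝ} (hγ₁ : 0 < γ₁) (hγs : 0 < γs) :
    (∀ κ : ℝ, 0 < κ →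
      ∃ d : ℝ × ℝ, d ∈ Kwide
        ∧ (∀ d' ∈ Kwide, wideObjective (marginLoss μ T Z) s γ₁ γs κ d
              ≤ wideObjective (marginLoss μ T Z) s γ₁ γs κ d')
        ∧ (∀ d' ∈ Kwide, (∀ d'' ∈ Kwide, wideObjective (marginLoss μ T Z) s γ₁ γs κ d'
              ≤ wideObjective (marginLoss μ T Z) s γ₁ γs κ d'') → d' = d)
        ∧ d.1 ^ 2 + d.2 ^ 2 < 1 ∧ 0 < d.2
        ∧ fderiv ℝ (wideObjective (marginLoss μ T Z) s γ₁ γs κ) d = 0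
        ∧ (∀ d' : ℝ × ℝ, d'.1 ^ 2 + d'.2 ^ 2 < 1 → 0 < d'.2 →
            fderiv ℝ (wideObjective (marginLoss μ T Z) s γ₁ γs κ) d' = 0 → d' = d))
    ∧ StrictMonoOn (wideValue (marginLoss μ T Z) s γ₁ γs) (Ioi 0)
    ∧ (∃ L : EReal,
        Tendsto (fun κ : ℝ => (wideValue (marginLoss μ T Z) s γ₁ γs κ : EReal)) (𝓝[>] 0) (𝓝 L)
          ∧ L < 0)
    ∧ (∃ L : EReal,
        Tendsto (fun κ : ℝ => (wideValue (marginLoss μ T Z) s γ₁ γs κ : EReal)) atTop (𝓝 L)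
          ∧ 0 < L)
    ∧ (∃! κ : ℝ, 0 < κ ∧ wideValue (marginLoss μ T Z) s γ₁ γs κ = 0) := by
  have hF := isMarginLoss_marginLoss hT hZ hindep hcentered hsmall
  refine ⟨fun κ hκ => ?_, hF.strictMonoOn_wideValue s γ₁ γs,
    ⟨wideValue (marginLoss μ T Z) s γ₁ γs 0, ?_, ?_⟩, ⟨⊤, ?_, EReal.zero_lt_top⟩,
    hF.existsUnique_wideValue_eq_zero s γ₁ hγs⟩
  · obtain ⟨d, hd, hmin⟩ := hF.exists_isMinOn_wideObjective s γ₁ γs κ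
    have hunique {d' : ℝ × ℝ} (hd' : d' ∈ Kwide) hmin' : d' = d :=
      (hF.strictConvexOn_wideObjective s γ₁ hγs κ).eq_of_isMinOn hmin' hmin hd' hd
    have hdisk := sq_add_sq_lt_one_of_isMinOn (hF.convexOn_smul_sub_mul_snd s γ₁ κ) hγs hd hmin
    have hpos := hF.snd_pos_of_isMinOn_wideObjective s γs hγ₁ hκ hd hdisk hmin
    have hstationary := (hmin.isLocalMin (Kwide_mem_nhds hdisk hpos)).fderiv_eq_zero
    refine ⟨d, hd, hmin, fun d' hd' => hunique hd', hdisk, hpos, hstationary,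
      fun d' hdisk' hpos' hderiv => ?_⟩
    have hd' : d' ∈ Kwide := ⟨hdisk'.le, hpos'.le⟩
    exact hunique hd' (hF.isMinOn_of_fderiv_wideObjective_eq_zero s γ₁ hγs hκ hd' hdisk' hderiv)
  · exact (continuous_coe_real_ereal.comp
      (hF.continuous_wideValue s γ₁ γs)).continuousWithinAt.tendsto
  · exact EReal.coe_neg'.2 (hF.wideValue_zero_neg s γ₁ hγs)
  · exact EReal.tendsto_coe_nhds_top_iff.2 (hF.tendsto_wideValue_atTop s γ₁ γs)

/-- Properties of the wide-limit optimization problem: unique interior minimizer characterized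
by first-order stationarity, strict monotonicity of `T_∞`, its limits at `0⁺` and `+∞`
(in the extended reals), and the unique zero `κ̄^{wide}`. -/
theorem statement_18 (f₀ : ℝ → ℝ) (hf₀ : Continuous f₀) (hf01 : ∀ x, f₀ x ∈ Set.Icc (0:ℝ) 1)
    (hnd : NonDeg f₀)
    (ψ₂ γ₁ γs : ℝ) (hψ₂ : 0 < ψ₂) (hγ₁ : 0 < γ₁) (hγs : 0 < γs) :
    (∀ κ : ℝ, 0 < κ →
      ∃ d : ℝ × ℝ, d ∈ Kwide
        ∧ (∀ d' ∈ Kwide, Rwide f₀ ψ₂ γ₁ γs κ d ≤ Rwide f₀ ψ₂ γ₁ γs κ d')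
        ∧ (∀ d' ∈ Kwide, (∀ d'' ∈ Kwide,
              Rwide f₀ ψ₂ γ₁ γs κ d' ≤ Rwide f₀ ψ₂ γ₁ γs κ d'') → d' = d)
        ∧ d.1 ^ 2 + d.2 ^ 2 < 1 ∧ 0 < d.2
        ∧ fderiv ℝ (Rwide f₀ ψ₂ γ₁ γs κ) d = 0
        ∧ (∀ d' : ℝ × ℝ, d'.1 ^ 2 + d'.2 ^ 2 < 1 → 0 < d'.2 →
            fderiv ℝ (Rwide f₀ ψ₂ γ₁ γs κ) d' = 0 → d' = d))
    ∧ StrictMonoOn (Twide f₀ ψ₂ γ₁ γs) (Set.Ioi 0)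
    ∧ (∃ L : EReal,
        Tendsto (fun κ : ℝ => ((Twide f₀ ψ₂ γ₁ γs κ : ℝ) : EReal))
          (nhdsWithin 0 (Set.Ioi 0)) (nhds L) ∧ L < 0)
    ∧ (∃ L : EReal,
        Tendsto (fun κ : ℝ => ((Twide f₀ ψ₂ γ₁ γs κ : ℝ) : EReal)) atTop (nhds L) ∧ 0 < L)
    ∧ (∃! κ : ℝ, 0 < κ ∧ Twide f₀ ψ₂ γ₁ γs κ = 0) := by
  simp only [Rwide_eq_wideObjective hf₀.measurable hf01, Twide_eq_wideValue hf₀.measurable hf01]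
  have := isProbabilityMeasure_labelLaw hf₀.measurable hf01
  exact statement_18_general ((memLp_id_labelLaw hf01).comp_fst stdG)
    (memLp_id_stdG.comp_snd (labelLaw f₀)) (indepFun_prod measurable_id measurable_id)
    integral_snd_prod_stdG (prod_stdG_abs_fst_lt_pos hf₀.measurable hf01) _ hγ₁ hγs

end MaxMargin
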